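/- arXiv:2603.13796 — 5 statements merged into one kernel-verified Lean document; each statement's English description precedes it below -/
import Mathlib

section
/- Information monotonicity (data processing) of f-mutual information: let f : ℝ → ℝ be convex on the set [0,∞) of nonnegative reals, let p be a joint pmf on α × β with marginals pX, pY, and let T : γ × α → ℝ be a stochastic channel, i.e. T(z,x) ≥ 0 for all z,x and Σ_z T(z,x) = 1 for every x. Define the processed joint pmf q on γ × β by q(z,y) = Σ_x T(z,x)·p(x,y). Assume pX(x) > 0 for all x, pY(y) > 0 for all y, and qZ(z) := Σ_x T(z,x)·pX(x) > 0 for all z. Then MI^f(q) ≤ MI^f(p). -/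
/-!
The `f`-divergence `∑ Q f(P / Q)` decreases when a channel `W` is applied to both arguments: for
each output `j`, Jensen's inequality with weights `W j i * Q i` bounds the output term by a
`W j i`-weighted sum of the input terms, and summing over `j` removes the channel because its
columns sum to `1`.

For a fixed value `y` of the second variable, the terms of `f`-mutual information form the
`f`-divergence between the column `P(·, y)` and the scaled marginal `pY(y) pX`. A channel acting on
the first variable is linear and preserves `pY`, so it maps both of these to their processed
versions.
-/

section FMutualInfo

open Matrix

variable {𝕜 M R ι κ α β γ : Type*}

section Marginals

/-- The law of the first variable under the joint weights `P`, written as a matrix so that a channel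
on the first variable acts by left multiplication. -/
def fstMarginal [AddCommMonoid M] [Fintype β] (P : Matrix α β M) (x : α) : M :=
  ∑ y, P x y

/-- The law of the second variable under the joint weights `P`. -/
def sndMarginal [AddCommMonoid M] [Fintype α] (P : Matrix α β M) (y : β) : M :=
  ∑ x, P x y

theorem fstMarginal_mul [NonUnitalNonAssocSemiring R] [Fintype α] [Fintype β]
    (W : Matrix γ α R) (P : Matrix α β R) :
    fstMarginal (W * P) = W *ᵥ fstMarginal P := by
  ext z
  simp only [fstMarginal, mul_apply, mulVec, dotProduct, Finset.mul_sum]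
  exact Finset.sum_comm

theorem sndMarginal_mul [NonAssocSemiring R] [Fintype α] [Fintype γ] {W : Matrix γ α R}
    (hW_sum : ∀ x, ∑ z, W z x = 1) (P : Matrix α β R) :
    sndMarginal (W * P) = sndMarginal P := by
  ext y
  simp only [sndMarginal, mul_apply]
  rw [Finset.sum_comm]
  simp only [← Finset.sum_mul, hW_sum, one_mul]

variable [AddCommMonoid M] [PartialOrder M] [IsOrderedAddMonoid M] {P : Matrix α β M}

theorem fstMarginal_nonneg [Fintype β] (hP : ∀ x y, 0 ≤ P x y) (x : α) : 0 ≤ fstMarginal P x :=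
  Finset.sum_nonneg fun y _ => hP x y

theorem sndMarginal_nonneg [Fintype α] (hP : ∀ x y, 0 ≤ P x y) (y : β) : 0 ≤ sndMarginal P y :=
  Finset.sum_nonneg fun x _ => hP x y

theorem eq_zero_of_fstMarginal_eq_zero [Fintype β] (hP : ∀ x y, 0 ≤ P x y) {x : α}
    (hx : fstMarginal P x = 0) (y : β) : P x y = 0 :=
  (Finset.sum_eq_zero_iff_of_nonneg fun y _ => hP x y).1 hx y (Finset.mem_univ y)

theorem eq_zero_of_sndMarginal_eq_zero [Fintype α] (hP : ∀ x y, 0 ≤ P x y) {y : β}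
    (hy : sndMarginal P y = 0) (x : α) : P x y = 0 :=
  (Finset.sum_eq_zero_iff_of_nonneg fun x _ => hP x y).1 hy x (Finset.mem_univ x)

end Marginals

variable [Field 𝕜]

/-- The `f`-divergence `D_f(P ‖ Q)` of finite families of weights. A vanishing reference weight
contributes `0`, which is the usual convention when `P` is absolutely continuous with respect to
`Q`. -/
def fDivergence [Fintype ι] (f : 𝕜 → 𝕜) (P Q : ι → 𝕜) : 𝕜 :=
  ∑ i, Q i * f (P i / Q i)

/-- The `f`-mutual information of joint weights `P`: the `f`-divergence of `P` from the product of
its marginals, with `P` not required to have total mass `1`. -/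
def fMutualInfo [Fintype α] [Fintype β] (f : 𝕜 → 𝕜) (P : Matrix α β 𝕜) : 𝕜 :=
  ∑ x, ∑ y, fstMarginal P x * sndMarginal P y *
    f (P x y / (fstMarginal P x * sndMarginal P y))

theorem fMutualInfo_eq_sum_fDivergence [Fintype α] [Fintype β] (f : 𝕜 → 𝕜) (P : Matrix α β 𝕜) :
    fMutualInfo f P = ∑ y, fDivergence f (P.col y) (sndMarginal P y • fstMarginal P) := by
  simp only [fMutualInfo, fDivergence, col_apply, Pi.smul_apply, smul_eq_mul,
    mul_comm (sndMarginal P _)]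
  exact Finset.sum_comm

variable [LinearOrder 𝕜] [IsStrictOrderedRing 𝕜] {f : 𝕜 → 𝕜}

/-- For `f t = t * log t` this is the log sum inequality. -/
theorem sum_mul_map_sum_div_sum_le (hf : ConvexOn 𝕜 (Set.Ici 0) f) {s : Finset ι} {a b : ι → 𝕜}
    (ha : ∀ i ∈ s, 0 ≤ a i) (hb : ∀ i ∈ s, 0 ≤ b i) (hab : ∀ i ∈ s, b i = 0 → a i = 0) :
    (∑ i ∈ s, b i) * f ((∑ i ∈ s, a i) / ∑ i ∈ s, b i) ≤ ∑ i ∈ s, b i * f (a i / b i) := by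
  rcases (Finset.sum_nonneg hb).eq_or_lt with hb_sum | hb_sum
  · have hb_zero := (Finset.sum_eq_zero_iff_of_nonneg hb).1 hb_sum.symm
    rw [← hb_sum, zero_mul, Finset.sum_eq_zero fun i hi => by rw [hb_zero i hi, zero_mul]]
  · have jensen := hf.map_centerMass_le hb hb_sum fun i hi => div_nonneg (ha i hi) (hb i hi)
    have mean_eq : s.centerMass b (fun i => a i / b i) = (∑ i ∈ s, a i) / ∑ i ∈ s, b i := by
      rw [Finset.centerMass, smul_eq_mul, inv_mul_eq_div]
      exact congrArg (· / _) (Finset.sum_congr rfl fun i hi => mul_div_cancel_of_imp' (hab i hi))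
    rw [mean_eq] at jensen
    exact (le_inv_mul_iff₀ hb_sum).1 jensen

theorem fDivergence_mulVec_le [Fintype ι] [Fintype κ] (hf : ConvexOn 𝕜 (Set.Ici 0) f)
    {W : Matrix κ ι 𝕜} (hW : ∀ j i, 0 ≤ W j i) (hW_sum : ∀ i, ∑ j, W j i = 1) {P Q : ι → 𝕜}
    (hP : ∀ i, 0 ≤ P i) (hQ : ∀ i, 0 ≤ Q i) (hPQ : ∀ i, Q i = 0 → P i = 0) :
    fDivergence f (W *ᵥ P) (W *ᵥ Q) ≤ fDivergence f P Q := by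
  have cancel_weight (j : κ) (i : ι) :
      W j i * Q i * f (W j i * P i / (W j i * Q i)) = W j i * (Q i * f (P i / Q i)) := by
    rcases eq_or_ne (W j i) 0 with hji | hji
    · simp only [hji, zero_mul]
    · rw [mul_div_mul_left _ _ hji, mul_assoc]
  calc fDivergence f (W *ᵥ P) (W *ᵥ Q)
      ≤ ∑ j, ∑ i, W j i * Q i * f (W j i * P i / (W j i * Q i)) :=
        Finset.sum_le_sum fun j _ => sum_mul_map_sum_div_sum_le hf
          (fun i _ => mul_nonneg (hW j i) (hP i)) (fun i _ => mul_nonneg (hW j i) (hQ i))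
          fun i _ hi => mul_eq_zero.2 ((mul_eq_zero.1 hi).imp_right (hPQ i))
    _ = ∑ i, ∑ j, W j i * (Q i * f (P i / Q i)) := by
        simp only [cancel_weight]
        exact Finset.sum_comm
    _ = fDivergence f P Q := by
        simp only [← Finset.sum_mul, hW_sum, one_mul, fDivergence]

theorem fMI_data_processing_general [Fintype α] [Fintype β] [Fintype γ]
    (hf : ConvexOn 𝕜 (Set.Ici 0) f) {P : Matrix α β 𝕜} (hP : ∀ x y, 0 ≤ P x y)
    {W : Matrix γ α 𝕜} (hW : ∀ z x, 0 ≤ W z x) (hW_sum : ∀ x, ∑ z, W z x = 1) :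
    fMutualInfo f (W * P) ≤ fMutualInfo f P := by
  rw [fMutualInfo_eq_sum_fDivergence, fMutualInfo_eq_sum_fDivergence]
  refine Finset.sum_le_sum fun y _ => ?_
  have processed_col : (W * P).col y = W *ᵥ P.col y := rfl
  rw [processed_col, fstMarginal_mul, sndMarginal_mul hW_sum, ← mulVec_smul]
  exact fDivergence_mulVec_le hf hW hW_sum (fun x => hP x y)
    (fun x => mul_nonneg (sndMarginal_nonneg hP y) (fstMarginal_nonneg hP x)) fun x hx =>
      (mul_eq_zero.1 hx).elim (fun hy => eq_zero_of_sndMarginal_eq_zero hP hy x)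
        fun hx => eq_zero_of_fstMarginal_eq_zero hP hx y

end FMutualInfo

/-- Information monotonicity (data processing) of f-mutual information. -/
theorem fMI_data_processing {α β γ : Type*} [Fintype α] [Fintype β] [Fintype γ]
    (f : ℝ → ℝ) (hf : ConvexOn ℝ (Set.Ici (0 : ℝ)) f)
    (p : α × β → ℝ)
    (hp_nonneg : ∀ x y, 0 ≤ p (x, y))
    (hp_sum : ∑ x, ∑ y, p (x, y) = 1)
    (T : γ × α → ℝ)
    (hT_nonneg : ∀ z x, 0 ≤ T (z, x))
    (hT_sum : ∀ x, ∑ z, T (z, x) = 1)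
    (q : γ × β → ℝ)
    (hq : ∀ z y, q (z, y) = ∑ x, T (z, x) * p (x, y))
    (hpX_pos : ∀ x, 0 < ∑ y, p (x, y))
    (hpY_pos : ∀ y, 0 < ∑ x, p (x, y))
    (hqZ_pos : ∀ z, 0 < ∑ x, T (z, x) * (∑ y, p (x, y))) :
    (∑ z, ∑ y, (∑ y', q (z, y')) * (∑ z', q (z', y)) *
        f (q (z, y) / ((∑ y', q (z, y')) * (∑ z', q (z', y))))) ≤
    (∑ x, ∑ y, (∑ y', p (x, y')) * (∑ x', p (x', y)) *
        f (p (x, y) / ((∑ y', p (x, y')) * (∑ x', p (x', y))))) := by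
  simp only [hq]
  exact fMI_data_processing_general hf hp_nonneg hT_nonneg hT_sum
end

section
/- Uniqueness of the KL dual optimizer: let p, q be pmfs on a finite type Ω with p(σ) > 0 and q(σ) > 0 for all σ, and let D : Ω → ℝ satisfy D(σ) > 0 for all σ. If Σ_σ p(σ)·(log D(σ) + 1) − Σ_σ q(σ)·D(σ) = KL(p‖q), then D(σ) = p(σ)/q(σ) for every σ ∈ Ω. -/
/-!
Pointwise, `p log (p / q)` exceeds `p (log D + 1) - q D` by `q D φ(p / (q D))`, where
`φ t = t log t + 1 - t` is nonnegative on `t ≥ 0` and vanishes only at `t = 1`. If the integrals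
of the two sides agree, then this gap vanishes almost everywhere, which says `p = q D`.
-/

open MeasureTheory Real InformationTheory

section Pointwise

variable {p q d : ℝ}

lemma mul_klFun_div_mul (hq : q ≠ 0) (hdp : d = 0 → p = 0) :
    q * d * klFun (p / (q * d)) = p * log (p / q) - (p * (log d + 1) - q * d) := by
  rcases eq_or_ne p 0 with rfl | hp
  · simp [klFun_zero]
  have hd : d ≠ 0 := mt hdp hp
  have hlog : log (p / (q * d)) = log (p / q) - log d := by
    rw [← div_div, log_div (div_ne_zero hp hq) hd]
  rw [klFun_apply, hlog]
  field_simp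
  ring

lemma mul_log_add_one_sub_mul_le (hp : 0 ≤ p) (hq : 0 < q) (hd : 0 ≤ d) (hdp : d = 0 → p = 0) :
    p * (log d + 1) - q * d ≤ p * log (p / q) := by
  rw [← sub_nonneg, ← mul_klFun_div_mul hq.ne' hdp]
  have := klFun_nonneg (x := p / (q * d)) (by positivity)
  positivity

lemma mul_log_add_one_sub_mul_eq_iff (hp : 0 ≤ p) (hq : 0 < q) (hd : 0 ≤ d)
    (hdp : d = 0 → p = 0) :
    p * (log d + 1) - q * d = p * log (p / q) ↔ d = p / q := by
  rcases hd.eq_or_lt' with rfl | hd_pos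
  · simp [hdp rfl]
  have hqd : 0 < q * d := mul_pos hq hd_pos
  calc p * (log d + 1) - q * d = p * log (p / q)
    _ ↔ q * d * klFun (p / (q * d)) = 0 := by
      rw [mul_klFun_div_mul hq.ne' hdp, sub_eq_zero, eq_comm]
    _ ↔ p / (q * d) = 1 := by
      rw [mul_eq_zero_iff_left hqd.ne', klFun_eq_zero_iff (by positivity)]
    _ ↔ d = p / q := by
      rw [div_eq_one_iff_eq hqd.ne', eq_div_iff hq.ne', mul_comm d, eq_comm]

end Pointwise

theorem kl_dual_optimizer_unique_general {Ω : Type*} [MeasurableSpace Ω] {μ : Measure Ω}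
    {p q D : Ω → ℝ} (hp : ∀ᵐ σ ∂μ, 0 ≤ p σ) (hq : ∀ᵐ σ ∂μ, 0 < q σ) (hD : ∀ᵐ σ ∂μ, 0 ≤ D σ)
    (hDp : ∀ᵐ σ ∂μ, D σ = 0 → p σ = 0)
    (h_log : Integrable (fun σ ↦ p σ * (log (D σ) + 1)) μ)
    (h_mul : Integrable (fun σ ↦ q σ * D σ) μ)
    (h_kl : Integrable (fun σ ↦ p σ * log (p σ / q σ)) μ) :
    (∫ σ, p σ * (log (D σ) + 1) ∂μ) - (∫ σ, q σ * D σ ∂μ) = ∫ σ, p σ * log (p σ / q σ) ∂μ ↔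
      ∀ᵐ σ ∂μ, D σ = p σ / q σ := by
  have h_le : (fun σ ↦ p σ * (log (D σ) + 1) - q σ * D σ) ≤ᵐ[μ]
      fun σ ↦ p σ * log (p σ / q σ) := by
    filter_upwards [hp, hq, hD, hDp] with σ using mul_log_add_one_sub_mul_le
  rw [← integral_sub' h_log h_mul, integral_eq_iff_of_ae_le (h_log.sub h_mul) h_kl h_le]
  apply Filter.eventually_congr
  filter_upwards [hp, hq, hD, hDp] with σ using mul_log_add_one_sub_mul_eq_iff

/-- Uniqueness of the KL dual optimizer. -/
theorem kl_dual_optimizer_unique {Ω : Type*} [Fintype Ω]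
    (p q : Ω → ℝ)
    (hp_pos : ∀ σ, 0 < p σ) (hp_sum : ∑ σ, p σ = 1)
    (hq_pos : ∀ σ, 0 < q σ) (hq_sum : ∑ σ, q σ = 1)
    (D : Ω → ℝ) (hD_pos : ∀ σ, 0 < D σ)
    (heq : (∑ σ, p σ * (Real.log (D σ) + 1)) - (∑ σ, q σ * D σ) =
      ∑ σ, p σ * Real.log (p σ / q σ)) :
    ∀ σ, D σ = p σ / q σ := by
  let : MeasurableSpace Ω := ⊤
  have h := kl_dual_optimizer_unique_general (μ := .count) (.of_forall fun σ ↦ (hp_pos σ).le)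
    (.of_forall hq_pos) (.of_forall fun σ ↦ (hD_pos σ).le)
    (.of_forall fun σ hσ ↦ absurd hσ (hD_pos σ).ne') .of_finite .of_finite .of_finite
  simp only [integral_count, Measure.ae_count_iff] at h
  exact h.mp heq
end

section
/- Dual lower bound for mutual information: let p be a joint pmf on α × β with marginals pX, pY, and let D : α × β → ℝ satisfy D(x,y) > 0 for all x,y. Then Σ_{x,y} p(x,y)·(log D(x,y) + 1) − Σ_{x,y} pX(x)·pY(y)·D(x,y) ≤ MI(p). -/
/-!
Applying `1 - x⁻¹ ≤ log x` to `x = p / r` gives `p - r ≤ p * log (p / r)`. With `r = q * d` this is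
`p * (log d + 1) - q * d ≤ p * log (p / q)`, the Fenchel–Young inequality behind the variational
formula for the Kullback–Leibler divergence. Mutual information is the divergence of a joint
distribution `p` from the product `q` of its marginals, and the bound is the sum of this inequality
over all points.
-/

open Real

lemma sub_le_mul_log_div {p r : ℝ} (hp : 0 ≤ p) (hr : 0 ≤ r) (hpr : r = 0 → p = 0) :
    p - r ≤ p * log (p / r) := by
  rcases hp.eq_or_lt with rfl | hp
  · simpa using hr
  have hr_pos : 0 < r := hr.lt_of_ne' fun h ↦ hp.ne' (hpr h)
  calc p - r = p * (1 - (p / r)⁻¹) := by field_simp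
    _ ≤ p * log (p / r) := by gcongr; exact one_sub_inv_le_log_of_pos (by positivity)

lemma mul_log_add_one_sub_mul_le_mul_log_div {p q d : ℝ} (hp : 0 ≤ p) (hq : 0 ≤ q) (hd : 0 ≤ d)
    (hpq : q = 0 → p = 0) (hpd : d = 0 → p = 0) :
    p * (log d + 1) - q * d ≤ p * log (p / q) := by
  have h_log : p * log (p / (q * d)) = p * log (p / q) - p * log d := by
    by_cases hp0 : p = 0
    · simp [hp0]
    · rw [← div_div, log_div (div_ne_zero hp0 (mt hpq hp0)) (mt hpd hp0), mul_sub]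
  have h_gibbs : p - q * d ≤ p * log (p / (q * d)) :=
    sub_le_mul_log_div hp (mul_nonneg hq hd) fun h ↦ (mul_eq_zero.mp h).elim hpq hpd
  linarith

theorem sum_mul_log_add_one_sub_sum_mul_le_sum_mul_log_div {ι : Type*} {s : Finset ι}
    {p q D : ι → ℝ} (hp : ∀ i ∈ s, 0 ≤ p i) (hq : ∀ i ∈ s, 0 ≤ q i) (hD : ∀ i ∈ s, 0 ≤ D i)
    (hpq : ∀ i ∈ s, q i = 0 → p i = 0) (hpD : ∀ i ∈ s, D i = 0 → p i = 0) :
    ∑ i ∈ s, p i * (log (D i) + 1) - ∑ i ∈ s, q i * D i ≤ ∑ i ∈ s, p i * log (p i / q i) := by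
  rw [← Finset.sum_sub_distrib]
  exact Finset.sum_le_sum fun i hi ↦ mul_log_add_one_sub_mul_le_mul_log_div
    (hp i hi) (hq i hi) (hD i hi) (hpq i hi) (hpD i hi)

lemma eq_zero_of_sum_mul_sum_eq_zero {α β R : Type*} [Fintype α] [Fintype β]
    [NonUnitalNonAssocSemiring R] [NoZeroDivisors R] [PartialOrder R] [IsOrderedAddMonoid R]
    {p : α × β → R} (hp : ∀ x y, 0 ≤ p (x, y)) {x : α} {y : β}
    (h : (∑ y', p (x, y')) * (∑ x', p (x', y)) = 0) : p (x, y) = 0 := by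
  rcases mul_eq_zero.mp h with hX | hY
  · exact (Finset.sum_eq_zero_iff_of_nonneg fun y' _ ↦ hp x y').mp hX y (Finset.mem_univ y)
  · exact (Finset.sum_eq_zero_iff_of_nonneg fun x' _ ↦ hp x' y).mp hY x (Finset.mem_univ x)

/-- Equality holds for `D (x, y) = p (x, y) / (pX x * pY y)`, which vanishes off the support
of `p`. -/
theorem mi_dual_lower_bound_general {α β : Type*} [Fintype α] [Fintype β]
    (p : α × β → ℝ) (hp_nonneg : ∀ x y, 0 ≤ p (x, y))
    (D : α × β → ℝ) (hD_nonneg : ∀ x y, 0 ≤ D (x, y)) (hpD : ∀ x y, D (x, y) = 0 → p (x, y) = 0) :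
    (∑ x, ∑ y, p (x, y) * (log (D (x, y)) + 1)) -
      (∑ x, ∑ y, (∑ y', p (x, y')) * (∑ x', p (x', y)) * D (x, y)) ≤
    ∑ x, ∑ y, p (x, y) * log (p (x, y) / ((∑ y', p (x, y')) * (∑ x', p (x', y)))) := by
  simp only [← Fintype.sum_prod_type']
  exact sum_mul_log_add_one_sub_sum_mul_le_sum_mul_log_div
    (fun z _ ↦ hp_nonneg z.1 z.2)
    (fun z _ ↦ mul_nonneg (Finset.sum_nonneg fun y' _ ↦ hp_nonneg z.1 y')
      (Finset.sum_nonneg fun x' _ ↦ hp_nonneg x' z.2))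
    (fun z _ ↦ hD_nonneg z.1 z.2)
    (fun _ _ ↦ eq_zero_of_sum_mul_sum_eq_zero hp_nonneg)
    (fun z _ ↦ hpD z.1 z.2)

/-- Dual lower bound for mutual information. -/
theorem mi_dual_lower_bound {α β : Type*} [Fintype α] [Fintype β]
    (p : α × β → ℝ)
    (hp_nonneg : ∀ x y, 0 ≤ p (x, y))
    (hp_sum : ∑ x, ∑ y, p (x, y) = 1)
    (D : α × β → ℝ) (hD_pos : ∀ x y, 0 < D (x, y)) :
    (∑ x, ∑ y, p (x, y) * (Real.log (D (x, y)) + 1)) -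
      (∑ x, ∑ y, (∑ y', p (x, y')) * (∑ x', p (x', y)) * D (x, y)) ≤
    ∑ x, ∑ y, p (x, y) * Real.log (p (x, y) / ((∑ y', p (x, y')) * (∑ x', p (x', y)))) :=
  mi_dual_lower_bound_general p hp_nonneg D (fun x y ↦ (hD_pos x y).le)
    fun x y h ↦ absurd h (hD_pos x y).ne'
end

section
/- Variational characterization of PMI: let p be a joint pmf on α × β with p(x,y) > 0 for all x,y, and marginals pX, pY. For any score function s : α × β → ℝ, define J(s) = Σ_{x,y} p(x,y)·(s(x,y) + 1) − Σ_{x,y} pX(x)·pY(y)·exp(s(x,y)). Then J(s) ≤ MI(p), and J(s) = MI(p) if and only if s(x,y) = PMI_p(x;y) for every x ∈ α and y ∈ β. -/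
/-!
Let `q` be the product of the marginals and `c = q * exp s`. The gap `MI(p) - J(s)` is the
generalized Kullback–Leibler divergence of `p` from `c`, that is, the sum of `c * klFun (p / c)`.
Since `klFun` is nonnegative and vanishes only at `1`, the gap is zero exactly when `p = c`.
-/

open InformationTheory (klFun klFun_zero klFun_nonneg klFun_eq_zero_iff)

section Pointwise

variable {a b : ℝ}

lemma mul_log_div_sub_eq_mul_klFun (hab : b = 0 → a = 0) (t : ℝ) :
    a * Real.log (a / b) - (a * (t + 1) - b * Real.exp t) =
      b * Real.exp t * klFun (a / (b * Real.exp t)) := by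
  rcases eq_or_ne a 0 with rfl | ha
  · simp [klFun_zero]
  have hb : b ≠ 0 := mt hab ha
  have log_tilt : Real.log (a / (b * Real.exp t)) = Real.log (a / b) - t := by
    rw [← div_div, Real.log_div (div_ne_zero ha hb) (Real.exp_ne_zero t), Real.log_exp]
  rw [klFun, log_tilt]
  field_simp
  ring

lemma mul_add_one_sub_mul_exp_le_mul_log_div (ha : 0 ≤ a) (hb : 0 ≤ b) (hab : b = 0 → a = 0)
    (t : ℝ) : a * (t + 1) - b * Real.exp t ≤ a * Real.log (a / b) := by
  have hbt : 0 ≤ b * Real.exp t := by positivity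
  rw [← sub_nonneg, mul_log_div_sub_eq_mul_klFun hab]
  exact mul_nonneg hbt (klFun_nonneg (div_nonneg ha hbt))

lemma mul_add_one_sub_mul_exp_eq_mul_log_div_iff (ha : 0 ≤ a) (hb : 0 ≤ b) (hab : b = 0 → a = 0)
    (t : ℝ) : a * (t + 1) - b * Real.exp t = a * Real.log (a / b) ↔ a = b * Real.exp t := by
  rcases hb.eq_or_lt' with rfl | hb
  · simp [hab rfl]
  have hbt : 0 < b * Real.exp t := by positivity
  rw [eq_comm, ← sub_eq_zero, mul_log_div_sub_eq_mul_klFun hab, mul_eq_zero_iff_left hbt.ne',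
    klFun_eq_zero_iff (div_nonneg ha hbt.le), div_eq_one_iff_eq hbt.ne']

lemma eq_mul_exp_iff_eq_log_div (ha : 0 < a) (hb : 0 < b) (t : ℝ) :
    a = b * Real.exp t ↔ t = Real.log (a / b) := by
  rw [← Real.exp_eq_exp (x := t), Real.exp_log (div_pos ha hb), eq_div_iff hb.ne',
    mul_comm, eq_comm]

end Pointwise

section FiniteSum

variable {ι : Type*} {u : Finset ι} {p q : ι → ℝ}

lemma sum_mul_add_one_sub_sum_mul_exp_le (hp : ∀ i ∈ u, 0 ≤ p i) (hq : ∀ i ∈ u, 0 ≤ q i)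
    (hpq : ∀ i ∈ u, q i = 0 → p i = 0) (s : ι → ℝ) :
    ∑ i ∈ u, p i * (s i + 1) - ∑ i ∈ u, q i * Real.exp (s i) ≤
      ∑ i ∈ u, p i * Real.log (p i / q i) := by
  rw [← Finset.sum_sub_distrib]
  exact Finset.sum_le_sum fun i hi ↦
    mul_add_one_sub_mul_exp_le_mul_log_div (hp i hi) (hq i hi) (hpq i hi) (s i)

lemma sum_mul_add_one_sub_sum_mul_exp_eq_iff (hp : ∀ i ∈ u, 0 ≤ p i) (hq : ∀ i ∈ u, 0 ≤ q i)
    (hpq : ∀ i ∈ u, q i = 0 → p i = 0) (s : ι → ℝ) :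
    ∑ i ∈ u, p i * (s i + 1) - ∑ i ∈ u, q i * Real.exp (s i) =
      ∑ i ∈ u, p i * Real.log (p i / q i) ↔ ∀ i ∈ u, p i = q i * Real.exp (s i) := by
  rw [← Finset.sum_sub_distrib, Finset.sum_eq_sum_iff_of_le fun i hi ↦
    mul_add_one_sub_mul_exp_le_mul_log_div (hp i hi) (hq i hi) (hpq i hi) (s i)]
  exact forall₂_congr fun i hi ↦
    mul_add_one_sub_mul_exp_eq_mul_log_div_iff (hp i hi) (hq i hi) (hpq i hi) (s i)

end FiniteSum

section Marginals

variable {α β : Type*} [Fintype α] [Fintype β] {p : α × β → ℝ}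

/-- The product `pX(x) * pY(y)` of the marginals of a weight `p` on `α × β`, the reference weight
against which pointwise mutual information is measured. It is a function on pairs, like `p`. -/
def marginalProd (p : α × β → ℝ) (z : α × β) : ℝ :=
  (∑ y, p (z.1, y)) * (∑ x, p (x, z.2))

lemma marginalProd_nonneg (hp : ∀ z, 0 ≤ p z) (z : α × β) : 0 ≤ marginalProd p z :=
  mul_nonneg (Finset.sum_nonneg fun y _ ↦ hp (z.1, y)) (Finset.sum_nonneg fun x _ ↦ hp (x, z.2))

lemma marginalProd_pos (hp : ∀ z, 0 ≤ p z) {z : α × β} (hz : 0 < p z) : 0 < marginalProd p z :=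
  mul_pos
    (Finset.sum_pos' (fun y _ ↦ hp (z.1, y)) ⟨z.2, Finset.mem_univ _, hz⟩)
    (Finset.sum_pos' (fun x _ ↦ hp (x, z.2)) ⟨z.1, Finset.mem_univ _, hz⟩)

lemma eq_zero_of_marginalProd_eq_zero (hp : ∀ z, 0 ≤ p z) {z : α × β}
    (hz : marginalProd p z = 0) : p z = 0 := by
  by_contra hne
  exact (marginalProd_pos hp ((hp z).lt_of_ne' hne)).ne' hz

-- The exponential form of the equality condition stays correct where `p` vanishes: there the
-- pointwise mutual information is `-∞` or undefined, while `Real.log 0 = 0`.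
theorem pmi_variational_general (hp : ∀ z, 0 ≤ p z) (s : α × β → ℝ) :
    ((∑ x, ∑ y, p (x, y) * (s (x, y) + 1)) -
        (∑ x, ∑ y, marginalProd p (x, y) * Real.exp (s (x, y))) ≤
      ∑ x, ∑ y, p (x, y) * Real.log (p (x, y) / marginalProd p (x, y))) ∧
    ((∑ x, ∑ y, p (x, y) * (s (x, y) + 1)) -
        (∑ x, ∑ y, marginalProd p (x, y) * Real.exp (s (x, y))) =
      (∑ x, ∑ y, p (x, y) * Real.log (p (x, y) / marginalProd p (x, y))) ↔
      ∀ x y, p (x, y) = marginalProd p (x, y) * Real.exp (s (x, y))) := by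
  have p_nonneg : ∀ z ∈ Finset.univ, 0 ≤ p z := fun z _ ↦ hp z
  have q_nonneg : ∀ z ∈ Finset.univ, 0 ≤ marginalProd p z := fun z _ ↦ marginalProd_nonneg hp z
  have p_eq_zero : ∀ z ∈ Finset.univ, marginalProd p z = 0 → p z = 0 :=
    fun _ _ ↦ eq_zero_of_marginalProd_eq_zero hp
  simp only [← Fintype.sum_prod_type']
  refine ⟨sum_mul_add_one_sub_sum_mul_exp_le p_nonneg q_nonneg p_eq_zero s, ?_⟩
  rw [sum_mul_add_one_sub_sum_mul_exp_eq_iff p_nonneg q_nonneg p_eq_zero s]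
  simp only [Finset.mem_univ, forall_const, Prod.forall]

end Marginals

/-- Variational characterization of pointwise mutual information. -/
theorem pmi_variational {α β : Type*} [Fintype α] [Fintype β]
    (p : α × β → ℝ)
    (hp_pos : ∀ x y, 0 < p (x, y))
    (hp_sum : ∑ x, ∑ y, p (x, y) = 1)
    (s : α × β → ℝ) :
    ((∑ x, ∑ y, p (x, y) * (s (x, y) + 1)) -
        (∑ x, ∑ y, (∑ y', p (x, y')) * (∑ x', p (x', y)) * Real.exp (s (x, y))) ≤
      ∑ x, ∑ y, p (x, y) * Real.log (p (x, y) / ((∑ y', p (x, y')) * (∑ x', p (x', y))))) ∧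
    ((∑ x, ∑ y, p (x, y) * (s (x, y) + 1)) -
        (∑ x, ∑ y, (∑ y', p (x, y')) * (∑ x', p (x', y)) * Real.exp (s (x, y))) =
      (∑ x, ∑ y, p (x, y) * Real.log (p (x, y) / ((∑ y', p (x, y')) * (∑ x', p (x', y))))) ↔
      ∀ x y, s (x, y) = Real.log (p (x, y) / ((∑ y', p (x, y')) * (∑ x', p (x', y))))) := by
  have hp : ∀ z, 0 ≤ p z := fun z ↦ (hp_pos z.1 z.2).le
  exact (pmi_variational_general hp s).imp_right fun h ↦ h.trans <| forall₂_congr fun x y ↦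
    eq_mul_exp_iff_eq_log_div (hp_pos x y) (marginalProd_pos hp (hp_pos x y)) (s (x, y))
end

section
/- Dual inequality for f-divergence (variational lower bound): let p, q be pmfs on a finite type Ω with q(σ) > 0 for all σ, let f : ℝ → ℝ be convex, and let u : Ω → ℝ be any function such that for each σ the set { t·u(σ) − f(t) : t ∈ ℝ } is bounded above. Define the convex conjugate f*(x) = sup_{t ∈ ℝ} ( t·x − f(t) ). Then Σ_σ u(σ)·p(σ) − Σ_σ f*(u(σ))·q(σ) ≤ d_f(p;q). -/
/-- The convex conjugate `f*(x) = sup_t (t * x - f t)` of a real function, used to bound `f` from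
below by affine functions. It is encoded as a real supremum, hence has the junk value `0` where
`t * x - f t` is unbounded above in `t`. -/
noncomputable def convexConjugate (f : ℝ → ℝ) (x : ℝ) : ℝ :=
  sSup (Set.range fun t : ℝ => t * x - f t)

theorem mul_sub_le_convexConjugate {f : ℝ → ℝ} {x : ℝ}
    (hbdd : BddAbove (Set.range fun t : ℝ => t * x - f t)) (t : ℝ) :
    t * x - f t ≤ convexConjugate f x :=
  le_csSup hbdd (Set.mem_range_self t)

theorem mul_sub_convexConjugate_mul_le {f : ℝ → ℝ} {x b : ℝ}
    (hbdd : BddAbove (Set.range fun t : ℝ => t * x - f t)) (a : ℝ) (hb : 0 < b) :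
    x * a - convexConjugate f x * b ≤ b * f (a / b) :=
  calc
    x * a - convexConjugate f x * b ≤ x * a - (a / b * x - f (a / b)) * b := by
      gcongr
      exact mul_sub_le_convexConjugate hbdd (a / b)
    _ = b * f (a / b) := by
      field_simp
      ring

theorem fdiv_dual_lower_bound_general {Ω : Type*} (s : Finset Ω) (p q : Ω → ℝ)
    (hq_pos : ∀ σ ∈ s, 0 < q σ) (f : ℝ → ℝ) (u : Ω → ℝ)
    (hbdd : ∀ σ ∈ s, BddAbove (Set.range fun t : ℝ => t * u σ - f t)) :
    (∑ σ ∈ s, u σ * p σ) - (∑ σ ∈ s, convexConjugate f (u σ) * q σ) ≤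
      ∑ σ ∈ s, q σ * f (p σ / q σ) := by
  rw [← Finset.sum_sub_distrib]
  exact Finset.sum_le_sum fun σ hσ =>
    mul_sub_convexConjugate_mul_le (hbdd σ hσ) (p σ) (hq_pos σ hσ)

/-- Dual inequality (variational lower bound) for f-divergence. -/
theorem fdiv_dual_lower_bound {Ω : Type*} [Fintype Ω]
    (p q : Ω → ℝ)
    (hp_nonneg : ∀ σ, 0 ≤ p σ) (hp_sum : ∑ σ, p σ = 1)
    (hq_pos : ∀ σ, 0 < q σ) (hq_sum : ∑ σ, q σ = 1)
    (f : ℝ → ℝ) (hf : ConvexOn ℝ Set.univ f)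
    (u : Ω → ℝ)
    (hbdd : ∀ σ, BddAbove (Set.range fun t : ℝ => t * u σ - f t)) :
    (∑ σ, u σ * p σ) - (∑ σ, (sSup (Set.range fun t : ℝ => t * u σ - f t)) * q σ) ≤
      ∑ σ, q σ * f (p σ / q σ) :=
  fdiv_dual_lower_bound_general Finset.univ p q (fun σ _ => hq_pos σ) f u fun σ _ => hbdd σ
end
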